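/- Let A be a nilpotent, finite-dimensional associative algebra over ℂ, let Z be a 1-dimensional ideal of A contained in Z(A) ∩ A', and let H = A/Z. Then t(H) + 2·dim(A') ≤ t(A). -/

import Mathlib

/-!
Write `d = dim A'`. Coboundaries on `A` are the functionals on `A'`, so
`dim M(A) = dim Z²(A) - d`, where `Z²` denotes the space of cocycles
(`multDim_add_finrank_derivedIdeal`). As `dim H = dim A - 1` and `dim H' = d - 1`, the claim
becomes `dim Z²(A) ≤ dim Z²(H) + 2 (dim A - d)` (`finrank_cocycles_le`).

Let `z` span `Z`. For a cocycle `f`, centrality of `z` gives `f(z, xy) = f(zx, y) = 0` and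
`f(xy, z) = f(x, yz) = 0`, so `f ↦ (f(z, ·), f(·, z))` maps `Z²(A)` into the square of the
annihilator of `A'`, which has dimension `2 (dim A - d)`. Cocycles in its kernel vanish on
`Z × A` and `A × Z`, so they are pulled back from cocycles on `H`.
-/

open Module

noncomputable section Defs

variable (A : Type*) [NonUnitalRing A] [Module ℂ A]

/-- `A` is nilpotent: there is an `n` such that every product of `n` elements of `A`
is zero (by associativity it suffices to consider left-normed products). -/
def IsNilpotentAlgebra : Prop :=
  ∃ n : ℕ, ∀ (x : A) (l : List A), l.length + 1 = n → l.foldl (· * ·) x = 0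

/-- The derived ideal `A' = AA`: the linear span of all products in `A`. -/
def derivedIdeal : Submodule ℂ A :=
  Submodule.span ℂ {a : A | ∃ x y : A, x * y = a}

/-- The space of 2-cocycles: bilinear maps `f : A × A → ℂ` with `f(xy,z) = f(x,yz)`. -/
def Cocycles : Submodule ℂ (A →ₗ[ℂ] A →ₗ[ℂ] ℂ) where
  carrier := {f | ∀ x y z : A, f (x * y) z = f x (y * z)}
  add_mem' := by
    intro f g hf hg x y z
    simp [hf x y z, hg x y z]
  zero_mem' := by
    intro x y z
    simp
  smul_mem' := by
    intro c f hf x y z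
    simp [hf x y z]

/-- The space of 2-coboundaries: bilinear maps of the form `f(x,y) = g(xy)`. -/
def Coboundaries : Submodule ℂ (A →ₗ[ℂ] A →ₗ[ℂ] ℂ) where
  carrier := {f | ∃ g : A →ₗ[ℂ] ℂ, ∀ x y : A, f x y = g (x * y)}
  add_mem' := by
    rintro f₁ f₂ ⟨g₁, h₁⟩ ⟨g₂, h₂⟩
    exact ⟨g₁ + g₂, fun x y => by simp [h₁ x y, h₂ x y]⟩
  zero_mem' := ⟨0, by simp⟩
  smul_mem' := by
    rintro c f ⟨g, h⟩
    exact ⟨c • g, fun x y => by simp [h x y]⟩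

/-- The dimension of the multiplier `M(A) = H²(A, ℂ)`, the quotient of the cocycles
by the coboundaries. -/
def multDim : ℕ :=
  Module.finrank ℂ ((Cocycles A).map (Coboundaries A).mkQ)

/-- `t(A) = (dim A)² - dim M(A)`. -/
def tInv : ℤ :=
  (Module.finrank ℂ A : ℤ) ^ 2 - (multDim A : ℤ)

/-- A (two-sided) ideal of `A`. -/
def IsIdealOf (I : Submodule ℂ A) : Prop :=
  ∀ a : A, ∀ x ∈ I, a * x ∈ I ∧ x * a ∈ I

/-- `A ≅ J₁ ⊕ A(k)`: `A` has a basis `x, z, a₁, …, a_k` whose only nonzero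
product of basis vectors is `x·x = z`. -/
def IsJ1SumAbelian (k : ℕ) : Prop :=
  ∃ b : Basis (Fin (k + 2)) ℂ A,
    b 0 * b 0 = b 1 ∧ ∀ i j : Fin (k + 2), ¬(i = 0 ∧ j = 0) → b i * b j = 0

/-- `A ≅ J₁`: `A` has a basis `x, z` with only nonzero product `x·x = z`. -/
def IsJ1 : Prop := IsJ1SumAbelian A 0

/-- `A ≅ C₃`: `A` has a basis `x, z, z'` with only nonzero products
`x·x = z`, `x·z = z·x = z'`. -/
def IsC3 : Prop :=
  ∃ b : Basis (Fin 3) ℂ A,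
    b 0 * b 0 = b 1 ∧ b 0 * b 1 = b 2 ∧ b 1 * b 0 = b 2 ∧
    b 0 * b 2 = 0 ∧ b 2 * b 0 = 0 ∧ b 1 * b 1 = 0 ∧ b 1 * b 2 = 0 ∧
    b 2 * b 1 = 0 ∧ b 2 * b 2 = 0

variable [SMulCommClass ℂ A A] [IsScalarTower ℂ A A]

/-- The center `Z(A) = {z : za = az = 0 for all a}`. -/
def centerSub : Submodule ℂ A where
  carrier := {z | ∀ a : A, z * a = 0 ∧ a * z = 0}
  add_mem' := by
    intro x y hx hy a
    constructor
    · rw [add_mul, (hx a).1, (hy a).1, add_zero]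
    · rw [mul_add, (hx a).2, (hy a).2, add_zero]
  zero_mem' := by
    intro a
    simp
  smul_mem' := by
    intro c x hx a
    constructor
    · rw [smul_mul_assoc, (hx a).1, smul_zero]
    · rw [mul_smul_comm, (hx a).2, smul_zero]

/-- `A` is extra special: `Z(A) = A'` and `dim Z(A) = 1`. -/
def IsExtraSpecialAlg : Prop :=
  centerSub A = derivedIdeal A ∧ Module.finrank ℂ (centerSub A) = 1

/-- `A ≅ E ⊕ A(k)` for some extra special algebra `E` of dimension `n`:
`A` decomposes as an internal direct sum of a subalgebra `E` which is extra special
of dimension `n` and a central subspace `Z` of dimension `k` all of whose products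
with `A` vanish. -/
def HasExtraSpecialDecomp (n k : ℕ) : Prop :=
  ∃ (E : NonUnitalSubalgebra ℂ A) (Z : Submodule ℂ A),
    IsCompl E.toSubmodule Z ∧ (∀ z ∈ Z, ∀ a : A, z * a = 0 ∧ a * z = 0) ∧
    IsExtraSpecialAlg ↥E ∧ Module.finrank ℂ ↥E = n ∧ Module.finrank ℂ ↥Z = k

end Defs

/-- Rank-nullity for the restriction of `f` to a subspace `p`. -/
lemma finrank_map_add_finrank_inf_ker {V W : Type*} [AddCommGroup V] [Module ℂ V]
    [AddCommGroup W] [Module ℂ W] [FiniteDimensional ℂ V] (f : V →ₗ[ℂ] W) (p : Submodule ℂ V) :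
    finrank ℂ (p.map f) + finrank ℂ ↥(p ⊓ LinearMap.ker f) = finrank ℂ p := by
  have h := (f.domRestrict p).finrank_range_add_finrank_ker
  rw [LinearMap.range_domRestrict, LinearMap.ker_domRestrict] at h
  rw [← h, ← Submodule.map_comap_subtype p (LinearMap.ker f), Submodule.finrank_map_subtype_eq]

section

variable {A : Type*} [NonUnitalRing A] [Module ℂ A]

lemma coboundaries_le_cocycles : Coboundaries A ≤ Cocycles A := by
  rintro f ⟨g, hg⟩ x y z
  rw [hg, hg, mul_assoc]

lemma mem_dualAnnihilator_derivedIdeal (φ : Dual ℂ A) :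
    φ ∈ (derivedIdeal A).dualAnnihilator ↔ ∀ x y : A, φ (x * y) = 0 := by
  rw [Submodule.mem_dualAnnihilator]
  refine ⟨fun h x y => h _ (Submodule.subset_span ⟨x, y, rfl⟩), fun h w hw => ?_⟩
  have hle : derivedIdeal A ≤ LinearMap.ker φ :=
    Submodule.span_le.2 (by rintro _ ⟨x, y, rfl⟩; exact h x y)
  exact hle hw

variable {H : Type*} [NonUnitalRing H] [Module ℂ H]

lemma map_derivedIdeal (π : A →ₗ[ℂ] H) (hmul : ∀ x y : A, π (x * y) = π x * π y)
    (hsurj : Function.Surjective π) : (derivedIdeal A).map π = derivedIdeal H := by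
  rw [derivedIdeal, derivedIdeal, Submodule.map_span]
  congr 1
  ext h
  constructor
  · rintro ⟨_, ⟨x, y, rfl⟩, rfl⟩
    exact ⟨π x, π y, (hmul x y).symm⟩
  · rintro ⟨u, v, rfl⟩
    obtain ⟨x, rfl⟩ := hsurj u
    obtain ⟨y, rfl⟩ := hsurj v
    exact ⟨x * y, ⟨x, y, rfl⟩, hmul x y⟩

/-- A cocycle on `A` vanishing on `ker π × A` and `A × ker π` descends to a cocycle on `H`. -/
lemma exists_cocycle_of_vanish (π : A →ₗ[ℂ] H) (hmul : ∀ x y : A, π (x * y) = π x * π y)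
    (hsurj : Function.Surjective π) {f : A →ₗ[ℂ] A →ₗ[ℂ] ℂ} (hf : f ∈ Cocycles A)
    (hl : ∀ w ∈ LinearMap.ker π, ∀ a, f w a = 0) (hr : ∀ w ∈ LinearMap.ker π, ∀ a, f a w = 0) :
    ∃ g ∈ Cocycles H, g.compl₁₂ π π = f := by
  obtain ⟨s, hs⟩ := π.exists_rightInverse_of_surjective (LinearMap.range_eq_top.2 hsurj)
  have hs' : ∀ x, π (s x) = x := fun x => LinearMap.congr_fun hs x
  have hl' : ∀ u v a, π u = π v → f u a = f v a := fun u v a h => by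
    rw [← sub_eq_zero, ← LinearMap.sub_apply, ← map_sub]
    exact hl _ (by rw [LinearMap.mem_ker, map_sub, h, sub_self]) a
  have hr' : ∀ u v a, π u = π v → f a u = f a v := fun u v a h => by
    rw [← sub_eq_zero, ← map_sub]
    exact hr _ (by rw [LinearMap.mem_ker, map_sub, h, sub_self]) a
  refine ⟨f.compl₁₂ s s, fun x y z => ?_, ?_⟩
  · simp only [LinearMap.compl₁₂_apply]
    rw [hl' (s (x * y)) (s x * s y) _ (by simp only [hmul, hs']), hf,
      hr' (s (y * z)) (s y * s z) _ (by simp only [hmul, hs'])]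
  · ext x y
    simp only [LinearMap.compl₁₂_apply]
    rw [hl' _ x _ (hs' _), hr' _ y _ (hs' _)]

variable [FiniteDimensional ℂ A]

lemma finrank_dualAnnihilator_derivedIdeal :
    finrank ℂ (derivedIdeal A) + finrank ℂ (derivedIdeal A).dualAnnihilator = finrank ℂ A :=
  Subspace.finrank_add_finrank_dualAnnihilator_eq _

variable [SMulCommClass ℂ A A] [IsScalarTower ℂ A A]

/-- Composing with the multiplication identifies the dual of `A'` with the coboundaries. -/
lemma finrank_coboundaries : finrank ℂ (Coboundaries A) = finrank ℂ (derivedIdeal A) := by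
  let D : Dual ℂ A →ₗ[ℂ] A →ₗ[ℂ] A →ₗ[ℂ] ℂ :=
    { toFun := fun g => (LinearMap.mul ℂ A).compr₂ g
      map_add' := fun g h => by ext; simp
      map_smul' := fun c g => by ext; simp }
  have hD : ∀ g x y, D g x y = g (x * y) := fun g x y => rfl
  have hrange : LinearMap.range D = Coboundaries A := by
    ext f
    constructor
    · rintro ⟨g, rfl⟩
      exact ⟨g, hD g⟩
    · rintro ⟨g, hg⟩
      exact ⟨g, by ext x y; rw [hD, hg]⟩
  have hker : LinearMap.ker D = (derivedIdeal A).dualAnnihilator := by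
    ext g
    rw [mem_dualAnnihilator_derivedIdeal, LinearMap.mem_ker]
    refine ⟨fun h x y => by rw [← hD, h]; rfl, fun h => ?_⟩
    ext x y
    exact h x y
  have h := D.finrank_range_add_finrank_ker
  rw [hrange, hker, Subspace.dual_finrank_eq] at h
  have := finrank_dualAnnihilator_derivedIdeal (A := A)
  omega

lemma multDim_add_finrank_derivedIdeal :
    multDim A + finrank ℂ (derivedIdeal A) = finrank ℂ (Cocycles A) := by
  have h := finrank_map_add_finrank_inf_ker (Coboundaries A).mkQ (Cocycles A)
  rwa [Submodule.ker_mkQ, inf_eq_right.2 coboundaries_le_cocycles, finrank_coboundaries] at h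

/-- Passing from `H = A / ℂz`, with `z` central, to `A` adds at most `2 dim (A / A')` to the
dimension of the space of cocycles. -/
lemma finrank_cocycles_le (π : A →ₗ[ℂ] H) (hmul : ∀ x y : A, π (x * y) = π x * π y)
    (hsurj : Function.Surjective π) {z : A} (hz : z ∈ centerSub A)
    (hker : LinearMap.ker π = Submodule.span ℂ {z}) :
    finrank ℂ (Cocycles A) ≤
      finrank ℂ (Cocycles H) + 2 * finrank ℂ (derivedIdeal A).dualAnnihilator := by
  have : FiniteDimensional ℂ H := Module.Finite.of_surjective π hsurj
  let T : (A →ₗ[ℂ] A →ₗ[ℂ] ℂ) →ₗ[ℂ] Dual ℂ A × Dual ℂ A :=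
    { toFun := fun f => (f z, f.flip z)
      map_add' := fun f g => rfl
      map_smul' := fun c f => rfl }
  let P : (H →ₗ[ℂ] H →ₗ[ℂ] ℂ) →ₗ[ℂ] A →ₗ[ℂ] A →ₗ[ℂ] ℂ :=
    { toFun := fun g => g.compl₁₂ π π
      map_add' := fun f g => rfl
      map_smul' := fun c f => rfl }
  have hT : (Cocycles A).map T ≤
      LinearMap.range ((derivedIdeal A).dualAnnihilator.subtype.prodMap
        (derivedIdeal A).dualAnnihilator.subtype) := by
    rintro _ ⟨f, hf, rfl⟩
    refine ⟨(⟨f z, (mem_dualAnnihilator_derivedIdeal _).2 fun x y => ?_⟩,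
      ⟨f.flip z, (mem_dualAnnihilator_derivedIdeal _).2 fun x y => ?_⟩), rfl⟩
    · change f z (x * y) = 0
      rw [← hf, (hz x).1, map_zero, LinearMap.zero_apply]
    · change f (x * y) z = 0
      rw [hf, (hz y).2, map_zero]
  have hP : Cocycles A ⊓ LinearMap.ker T ≤ (Cocycles H).map P := by
    rintro f ⟨hf, hfT⟩
    obtain ⟨h₁, h₂⟩ := Prod.ext_iff.1 (LinearMap.mem_ker.1 hfT)
    refine exists_cocycle_of_vanish π hmul hsurj hf ?_ ?_ <;> intro w hw a <;> rw [hker] at hw <;>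
      obtain ⟨c, rfl⟩ := Submodule.mem_span_singleton.1 hw
    · rw [map_smul, LinearMap.smul_apply, show f z a = 0 from LinearMap.congr_fun h₁ a, smul_zero]
    · rw [map_smul, show f a z = 0 from LinearMap.congr_fun h₂ a, smul_zero]
  have e₁ := finrank_map_add_finrank_inf_ker T (Cocycles A)
  have e₂ := (Submodule.finrank_mono hT).trans (LinearMap.finrank_range_le _)
  have e₃ := (Submodule.finrank_mono hP).trans (Submodule.finrank_map_le P (Cocycles H))
  rw [Module.finrank_prod] at e₂
  omega

end

/-- If `A` is nilpotent and finite-dimensional and `Z` is a 1-dimensional ideal of `A`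
contained in `Z(A) ∩ A'`, and `H = A/Z`, then `t(H) + 2 dim(A') ≤ t(A)`.
Here the quotient `A/Z` is represented by any associative ℂ-algebra `H` together with a
surjective multiplicative linear map `π : A → H` with kernel `Z`. -/
theorem tInv_quotient_add_two_dim_derived_le (A H : Type*) [NonUnitalRing A] [Module ℂ A] [SMulCommClass ℂ A A] [IsScalarTower ℂ A A]
    [NonUnitalRing H] [Module ℂ H] [SMulCommClass ℂ H H] [IsScalarTower ℂ H H]
    [FiniteDimensional ℂ A] (hnil : IsNilpotentAlgebra A)
    (Z : Submodule ℂ A) (hideal : IsIdealOf A Z)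
    (hdimZ : Module.finrank ℂ ↥Z = 1) (hle : Z ≤ centerSub A ⊓ derivedIdeal A)
    (π : A →ₗ[ℂ] H) (hmul : ∀ x y : A, π (x * y) = π x * π y)
    (hsurj : Function.Surjective π) (hker : LinearMap.ker π = Z) :
    tInv H + 2 * (Module.finrank ℂ ↥(derivedIdeal A) : ℤ) ≤ tInv A := by
  have : FiniteDimensional ℂ H := Module.Finite.of_surjective π hsurj
  obtain ⟨z, -, hspan⟩ := finrank_eq_one_iff'.1 hdimZ
  have hZ : LinearMap.ker π = Submodule.span ℂ {(z : A)} := by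
    rw [hker]
    refine le_antisymm (fun w hw => ?_) ((Submodule.span_singleton_le_iff_mem _ _).2 z.2)
    obtain ⟨c, hc⟩ := hspan ⟨w, hw⟩
    exact Submodule.mem_span_singleton.2 ⟨c, congrArg Subtype.val hc⟩
  have hcoc := finrank_cocycles_le π hmul hsurj (hle z.2).1 hZ
  have hann := finrank_dualAnnihilator_derivedIdeal (A := A)
  have hA := multDim_add_finrank_derivedIdeal (A := A)
  have hH := multDim_add_finrank_derivedIdeal (A := H)
  have hdim := π.finrank_range_add_finrank_ker
  rw [LinearMap.range_eq_top.2 hsurj, finrank_top, hker, hdimZ] at hdim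
  have hder := finrank_map_add_finrank_inf_ker π (derivedIdeal A)
  rw [map_derivedIdeal π hmul hsurj, hker, inf_eq_right.2 (hle.trans inf_le_right), hdimZ] at hder
  have hsq : (finrank ℂ A : ℤ) ^ 2 = (finrank ℂ H : ℤ) ^ 2 + 2 * (finrank ℂ H : ℤ) + 1 := by
    rw [← hdim]
    push_cast
    ring
  rw [tInv, tInv, hsq]
  omega
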